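/- Let T, d, p be positive integers and δ ≥ 0. Let ψ, ψ′ : {1,…,T} → ℝ^{p×d} be two convolution kernels, and for an input sequence u_1,…,u_T ∈ ℝ^d define the outputs f_ψ(u)_t = Σ_{i=1}^{t} ψ(i)·u_{t−i+1} and f_{ψ′}(u)_t = Σ_{i=1}^{t} ψ′(i)·u_{t−i+1}. If ‖f_ψ(u)_t − f_{ψ′}(u)_t‖₂ ≤ δ for every 1 ≤ t ≤ T and every input sequence with ‖u_i‖_∞ ≤ 1 for all i, then ‖(ψ(t) − ψ′(t))·v‖₂ ≤ 2δ for every 1 ≤ t ≤ T and every v ∈ ℝ^d with ‖v‖_∞ ≤ 1. -/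

import Mathlib

/-- Euclidean norm of a vector in `ℝ^p`. -/
noncomputable def vecNorm {p : ℕ} (v : Fin p → ℝ) : ℝ := Real.sqrt (∑ j, (v j) ^ 2)

/-!
The response at time `t` to the impulse `v, 0, 0, …` is exactly `ψ(t) v`, and the impulse is an
admissible input because `0` and `v` are. Comparing the two models on impulses therefore bounds
`(ψ(t) - ψ'(t)) v` by `δ`; the factor `2` is an artefact of comparing consecutive outputs on
constant inputs.
-/

section CausalConv

variable {E F : Type*} [AddCommMonoid E]

/-- The output `f_ψ(u)_t` of the causal convolution model with kernel `ψ` on the input `u`.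
Time starts at `1`, so `ψ 0` and `u 0` do not contribute. The values of `ψ` are additive maps,
which covers matrices acting on vectors. -/
def causalConv [AddCommMonoid F] (ψ : ℕ → E →+ F) (u : ℕ → E) (t : ℕ) : F :=
  ∑ i ∈ Finset.Icc 1 t, ψ i (u (t - i + 1))

theorem causalConv_single_one [AddCommMonoid F] (ψ : ℕ → E →+ F) (v : E) {t : ℕ} (ht : 1 ≤ t) :
    causalConv ψ (Pi.single 1 v) t = ψ t v := by
  have vanish : ∀ i ∈ Finset.Icc 1 t, i ≠ t →
      ψ i ((Pi.single 1 v : ℕ → E) (t - i + 1)) = 0 := by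
    intro i hi hit
    have hne : t - i + 1 ≠ 1 := by grind
    rw [Pi.single_eq_of_ne hne, map_zero]
  rw [causalConv, Finset.sum_eq_single_of_mem t (Finset.right_mem_Icc.mpr ht) vanish,
    Nat.sub_self, zero_add, Pi.single_eq_same]

theorem stmt11_general [AddCommGroup F] {S : Set E} (zero_mem : 0 ∈ S) (N : F → ℝ) {δ : ℝ}
    {ψ ψ' : ℕ → E →+ F} {t : ℕ} (ht : 1 ≤ t)
    (hyp : ∀ u : ℕ → E, (∀ i, u i ∈ S) → N (causalConv ψ u t - causalConv ψ' u t) ≤ δ)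
    {v : E} (hv : v ∈ S) :
    N ((ψ t - ψ' t) v) ≤ δ := by
  have impulse_mem : ∀ i : ℕ, (Pi.single 1 v : ℕ → E) i ∈ S := by
    intro i
    rw [Pi.single_apply]
    split_ifs
    exacts [hv, zero_mem]
  simpa only [causalConv_single_one _ _ ht, AddMonoidHom.sub_apply] using hyp _ impulse_mem

end CausalConv

theorem stmt11 (T d p : ℕ) (hT : 0 < T) (hd : 0 < d) (hp : 0 < p)
    (δ : ℝ) (hδ : 0 ≤ δ)
    (ψ ψ' : ℕ → Matrix (Fin p) (Fin d) ℝ)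
    (hyp : ∀ u : ℕ → (Fin d → ℝ), (∀ i, ∀ j, |u i j| ≤ 1) →
      ∀ t, 1 ≤ t → t ≤ T →
        vecNorm ((∑ i ∈ Finset.Icc 1 t, (ψ i).mulVec (u (t - i + 1)))
                 - ∑ i ∈ Finset.Icc 1 t, (ψ' i).mulVec (u (t - i + 1))) ≤ δ) :
    ∀ t, 1 ≤ t → t ≤ T → ∀ v : Fin d → ℝ, (∀ j, |v j| ≤ 1) →
      vecNorm ((ψ t - ψ' t).mulVec v) ≤ 2 * δ := by
  intro t ht htT v hv
  have error_le : vecNorm ((ψ t).mulVec v - (ψ' t).mulVec v) ≤ δ :=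
    stmt11_general (S := {w : Fin d → ℝ | ∀ j, |w j| ≤ 1}) (by simp) vecNorm
      (ψ := fun i ↦ (ψ i).mulVecLin.toAddMonoidHom) (ψ' := fun i ↦ (ψ' i).mulVecLin.toAddMonoidHom)
      ht (fun u hu ↦ hyp u hu t ht htT) hv
  rw [Matrix.sub_mulVec]
  linarith
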